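/- Application: let (X,d,μ) be a separable metric measure space with μ(X) < ∞ satisfying the growth condition μ(B_r) ≤ A r^n, and suppose Λ_β is dense in L²(μ) for some 0 < β < min(n,γ). Let K be a standard singular integral kernel such that K*(x,y) = conj(K(y,x)) also satisfies the smoothness condition (S2). If the smooth truncations satisfy ‖T_ε 1‖_{Λ_β} ≤ C' and ‖T*_ε 1‖_{Λ_β} ≤ C'' for all ε > 0, then there is a constant C such that ‖T_ε f‖_{L²(μ)} ≤ C‖f‖_{L²(μ)} for all f ∈ Λ_β and all ε > 0; hence each T_ε extends to a bounded operator on L²(μ) with norm uniformly bounded in ε. -/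

import Mathlib

open MeasureTheory Metric

namespace SingInt

lemma lint_gen {X : Type*} [MetricSpace X] [MeasurableSpace X] [BorelSpace X]
    (μ : Measure X) (n A : ℝ)
    (growth : ∀ (x : X) (r : ℝ), 0 < r → μ (ball x r) ≤ ENNReal.ofReal (A * r ^ n))
    (x : X) (S : Set X) (hS : MeasurableSet S) (F : X → ENNReal) (R c : ℕ → ℝ)
    (hR : ∀ k, 0 < R k)
    (h : ∀ y ∈ S, ∃ k, dist y x < R k ∧ F y ≤ ENNReal.ofReal (c k)) :
    ∫⁻ y in S, F y ∂μ ≤ ∑' k, ENNReal.ofReal (c k) * ENNReal.ofReal (A * R k ^ n) := by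
  calc ∫⁻ y in S, F y ∂μ
      ≤ ∫⁻ y in S, ∑' k, (ball x (R k)).indicator (fun _ => ENNReal.ofReal (c k)) y ∂μ := by
        refine setLIntegral_mono' hS ?_
        intro y hy
        obtain ⟨k, hk, hF⟩ := h y hy
        refine hF.trans ?_
        refine le_trans ?_ (ENNReal.le_tsum k)
        rw [Set.indicator_of_mem (by simpa using hk)]
    _ ≤ ∫⁻ y, ∑' k, (ball x (R k)).indicator (fun _ => ENNReal.ofReal (c k)) y ∂μ :=
        setLIntegral_le_lintegral _ _
    _ = ∑' k, ∫⁻ y, (ball x (R k)).indicator (fun _ => ENNReal.ofReal (c k)) y ∂μ := by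
        refine lintegral_tsum ?_
        intro k
        exact (measurable_const.indicator measurableSet_ball).aemeasurable
    _ ≤ _ := by
        refine ENNReal.tsum_le_tsum fun k => ?_
        rw [lintegral_indicator_const measurableSet_ball]
        gcongr
        exact growth x _ (hR k)

lemma geom_sum (D q : ℝ) (hD : 0 ≤ D) (hq : 0 ≤ q) (hq1 : q < 1) (u v : ℕ → ℝ) 
    (hu : ∀ k, 0 ≤ u k) (h : ∀ k, u k * v k = D * q ^ k) :
    ∑' k, ENNReal.ofReal (u k) * ENNReal.ofReal (v k) = ENNReal.ofReal (D * (1 - q)⁻¹) := by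
  have : ∀ k, ENNReal.ofReal (u k) * ENNReal.ofReal (v k) = ENNReal.ofReal (D * q ^ k) := by
    intro k
    rw [← ENNReal.ofReal_mul (hu k), h k]
  simp_rw [this]
  rw [← ENNReal.ofReal_tsum_of_nonneg (fun k => by positivity)
    ((summable_geometric_of_lt_one hq hq1).mul_left D), tsum_mul_left,
    tsum_geometric_of_lt_one hq hq1]

lemma int_small {X : Type*} [MetricSpace X] [MeasurableSpace X] [BorelSpace X]
    (μ : Measure X) (n A β : ℝ) (hA : 0 < A) (hβ : 0 < β) (hβn : β < n)
    (growth : ∀ (x : X) (r : ℝ), 0 < r → μ (ball x r) ≤ ENNReal.ofReal (A * r ^ n)) :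
    ∃ C : ℝ, 0 ≤ C ∧ ∀ (x : X) (r : ℝ), 0 < r →
      ∫⁻ y in ball x r, ENNReal.ofReal (dist x y ^ (β - n)) ∂μ ≤ ENNReal.ofReal (C * r ^ β) := by
  have hq : (0:ℝ) ≤ (1/2) ^ β := by positivity
  have hq1 : ((1:ℝ)/2) ^ β < 1 := Real.rpow_lt_one (by norm_num) (by norm_num) hβ
  have h1q : 0 < 1 - ((1:ℝ)/2) ^ β := by linarith
  refine ⟨A * (1/2) ^ (β - n) * 2 ^ n * (1 - (1/2) ^ β)⁻¹, by positivity, ?_⟩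
  intro x r hr
  have key := lint_gen μ n A growth x (ball x r) measurableSet_ball
    (fun y => ENNReal.ofReal (dist x y ^ (β - n)))
    (fun k => 2 * ((1/2) ^ k * r)) (fun k => ((1/2) ^ (k+1) * r) ^ (β - n))
    (fun k => by positivity) ?_
  · refine key.trans ?_
    rw [geom_sum (A * (1/2) ^ (β - n) * 2 ^ n * r ^ β) ((1/2) ^ β) (by positivity) hq hq1]
    · apply le_of_eq
      congr 1
      ring
    · intro k; positivity
    · intro k
      rw [pow_succ, Real.mul_rpow (by positivity) (by positivity),
        Real.mul_rpow (by positivity) (by positivity),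
        Real.mul_rpow (by positivity) (by positivity),
        Real.mul_rpow (by positivity) (by positivity)]
      rw [show r ^ β = r ^ (β - n) * r ^ n by rw [← Real.rpow_add hr]; ring_nf]
      have : (((1:ℝ)/2) ^ β) ^ k = (((1:ℝ)/2)^k) ^ (β - n) * (((1:ℝ)/2)^k) ^ n := by
        rw [← Real.rpow_add (by positivity), sub_add_cancel, ← Real.rpow_natCast,
          ← Real.rpow_natCast, ← Real.rpow_mul (by norm_num), ← Real.rpow_mul (by norm_num),
          mul_comm]
      rw [this]
      ring
  · intro y hy
    rw [mem_ball] at hy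
    rcases eq_or_ne x y with rfl | hxy
    · refine ⟨0, ?_, ?_⟩
      · simp; exact hr
      · rw [dist_self, Real.zero_rpow (by linarith)]
        simp
    · have hd : 0 < dist x y := dist_pos.2 hxy
      rw [dist_comm] at hy
      obtain ⟨k, hk1, hk2⟩ := exists_nat_pow_near_of_lt_one (x := dist x y / r) (y := (1/2:ℝ))
        (by positivity) ((div_le_one hr).2 hy.le) (by norm_num) (by norm_num)
      rw [lt_div_iff₀ hr] at hk1
      rw [div_le_iff₀ hr] at hk2
      refine ⟨k, ?_, ?_⟩
      · rw [dist_comm]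
        have : 0 < (1/2:ℝ)^k * r := by positivity
        linarith
      · apply ENNReal.ofReal_le_ofReal
        exact Real.rpow_le_rpow_of_nonpos (by positivity) hk1.le (by linarith)

lemma int_large {X : Type*} [MetricSpace X] [MeasurableSpace X] [BorelSpace X]
    (μ : Measure X) (n A γ β : ℝ) (hn : 0 < n) (hA : 0 < A) (hβγ : β < γ)
    (growth : ∀ (x : X) (r : ℝ), 0 < r → μ (ball x r) ≤ ENNReal.ofReal (A * r ^ n)) :
    ∃ C : ℝ, 0 ≤ C ∧ ∀ (x : X) (r : ℝ), 0 < r →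
      ∫⁻ y in (ball x r)ᶜ, ENNReal.ofReal (dist x y ^ (β - γ - n)) ∂μ
        ≤ ENNReal.ofReal (C * r ^ (β - γ)) := by
  have hq : (0:ℝ) ≤ 2 ^ (β - γ) := by positivity
  have hq1 : (2:ℝ) ^ (β - γ) < 1 := Real.rpow_lt_one_of_one_lt_of_neg (by norm_num) (by linarith)
  have h1q : 0 < 1 - (2:ℝ) ^ (β - γ) := by linarith
  refine ⟨A * 2 ^ n * (1 - 2 ^ (β - γ))⁻¹, by positivity, ?_⟩
  intro x r hr
  have key := lint_gen μ n A growth x (ball x r)ᶜ measurableSet_ball.compl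
    (fun y => ENNReal.ofReal (dist x y ^ (β - γ - n)))
    (fun k => 2 ^ (k + 1) * r) (fun k => (2 ^ k * r) ^ (β - γ - n))
    (fun k => by positivity) ?_
  · refine key.trans ?_
    rw [geom_sum (A * 2 ^ n * r ^ (β - γ)) (2 ^ (β - γ)) (by positivity) hq hq1]
    · apply le_of_eq
      congr 1
      ring
    · intro k; positivity
    · intro k
      rw [pow_succ, Real.mul_rpow (by positivity) (by positivity),
        Real.mul_rpow (by positivity) (by positivity),
        Real.mul_rpow (by positivity) (by positivity)]
      rw [show r ^ (β - γ) = r ^ (β - γ - n) * r ^ n by rw [← Real.rpow_add hr]; ring_nf]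
      have : ((2:ℝ) ^ (β - γ)) ^ k = ((2:ℝ)^k) ^ (β - γ - n) * ((2:ℝ)^k) ^ n := by
        rw [← Real.rpow_add (by positivity), sub_add_cancel, ← Real.rpow_natCast,
          ← Real.rpow_natCast, ← Real.rpow_mul (by norm_num), ← Real.rpow_mul (by norm_num),
          mul_comm]
      rw [this]
      ring
  · intro y hy
    rw [Set.mem_compl_iff, mem_ball, not_lt, dist_comm] at hy
    obtain ⟨k, hk1, hk2⟩ := exists_nat_pow_near (x := dist x y / r) (y := (2:ℝ))
        ((one_le_div hr).2 hy) (by norm_num)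
    rw [le_div_iff₀ hr] at hk1
    rw [div_lt_iff₀ hr] at hk2
    refine ⟨k, ?_, ?_⟩
    · rw [dist_comm]; exact hk2
    · apply ENNReal.ofReal_le_ofReal
      exact Real.rpow_le_rpow_of_nonpos (by positivity) hk1 (by linarith)

/-- truncated kernel -/
noncomputable def tk {X : Type*} [MetricSpace X] (η : ℝ → ℝ) (K : X → X → ℂ) (ε : ℝ) (x y : X) : ℂ :=
  (η (dist x y / ε) : ℂ) * K x y

lemma tk_meas {X : Type*} [MetricSpace X] [MeasurableSpace X] [BorelSpace X]
    [SecondCountableTopology X] (η : ℝ → ℝ) (hη : Continuous η) (K : X → X → ℂ) 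
    (hKm : Measurable (Function.uncurry K)) (ε : ℝ) : 
    Measurable (Function.uncurry (tk η K ε)) := by
  have h1 : Measurable (fun p : X × X => (η (dist p.1 p.2 / ε) : ℂ)) := by
    apply Complex.measurable_ofReal.comp
    exact hη.measurable.comp ((measurable_fst.dist measurable_snd).div_const ε)
  exact h1.mul hKm

lemma tk_S1 {X : Type*} [MetricSpace X] (n : ℝ) (hn : 0 < n)
    (K : X → X → ℂ) (C₁ : ℝ) (_hC₁ : 0 ≤ C₁)
    (hS1 : ∀ x y : X, x ≠ y → ‖K x y‖ ≤ C₁ / dist x y ^ n)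
    (η : ℝ → ℝ) (hη0 : ∀ s, 0 ≤ η s) (hη1 : ∀ s, η s ≤ 1)
    (hηlo : ∀ s : ℝ, s ≤ 1 / 2 → η s = 0)
    (ε : ℝ) (x y : X) : ‖tk η K ε x y‖ ≤ C₁ / dist x y ^ n := by
  rcases eq_or_ne x y with rfl | h
  · simp [tk, hηlo 0 (by norm_num), Real.zero_rpow hn.ne']
  · rw [tk, norm_mul, Complex.norm_real, Real.norm_of_nonneg (hη0 _)]
    calc _ ≤ 1 * ‖K x y‖ := by gcongr; exact hη1 _
      _ ≤ _ := by rw [one_mul]; exact hS1 x y h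

lemma tk_bound {X : Type*} [MetricSpace X] (n : ℝ) (hn : 0 < n)
    (K : X → X → ℂ) (C₁ : ℝ) (hC₁ : 0 ≤ C₁)
    (hS1 : ∀ x y : X, x ≠ y → ‖K x y‖ ≤ C₁ / dist x y ^ n)
    (η : ℝ → ℝ) (hη0 : ∀ s, 0 ≤ η s) (hη1 : ∀ s, η s ≤ 1)
    (hηlo : ∀ s : ℝ, s ≤ 1 / 2 → η s = 0)
    (ε : ℝ) (hε : 0 < ε) (x y : X) : ‖tk η K ε x y‖ ≤ C₁ * 2 ^ n / ε ^ n := by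
  by_cases h : dist x y / ε ≤ 1 / 2
  · simp only [tk, hηlo _ h]
    simp; positivity
  · push Not at h
    rw [lt_div_iff₀ hε] at h
    refine (tk_S1 n hn K C₁ hC₁ hS1 η hη0 hη1 hηlo ε x y).trans ?_
    rw [div_le_div_iff₀ (Real.rpow_pos_of_pos (by linarith) _) (by positivity), mul_assoc,
      ← Real.mul_rpow (by norm_num) dist_nonneg]
    gcongr
    linarith

lemma eta_lip (η : ℝ → ℝ) (hη : ContDiff ℝ 1 η) : ∃ L : ℝ, 0 ≤ L ∧ ∀ s ∈ Set.Icc (0:ℝ) 3,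
    ∀ t ∈ Set.Icc (0:ℝ) 3, |η s - η t| ≤ L * |s - t| := by
  obtain ⟨L, hL⟩ := (isCompact_Icc (a := (0:ℝ)) (b := 3)).exists_bound_of_continuousOn
    (hη.continuous_deriv le_rfl).continuousOn
  refine ⟨L, (norm_nonneg _).trans (hL 0 (by simp)), ?_⟩
  intro s hs t ht
  exact Convex.norm_image_sub_le_of_norm_deriv_le
    (fun x _ => (hη.differentiable one_ne_zero).differentiableAt) hL (convex_Icc _ _) ht hs

lemma tk_S2 {X : Type*} [MetricSpace X] (n γ : ℝ) (hn : 0 < n) (hγ : 0 < γ) (hγ1 : γ ≤ 1)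
    (K : X → X → ℂ) (C₁ C₂ : ℝ) (hC₁ : 0 ≤ C₁) (hC₂ : 0 ≤ C₂)
    (hS1 : ∀ x y : X, x ≠ y → ‖K x y‖ ≤ C₁ / dist x y ^ n)
    (hS2 : ∀ x₁ x₂ y : X, x₁ ≠ y → 2 * dist x₁ x₂ ≤ dist x₁ y →
      ‖K x₁ y - K x₂ y‖ ≤ C₂ * dist x₁ x₂ ^ γ / dist x₁ y ^ (n + γ))
    (η : ℝ → ℝ) (hη : ContDiff ℝ 1 η) (hη0 : ∀ s, 0 ≤ η s) (hη1 : ∀ s, η s ≤ 1)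
    (hηhi : ∀ s : ℝ, 1 ≤ s → η s = 1) :
    ∃ C₃ : ℝ, 0 ≤ C₃ ∧ ∀ ε : ℝ, 0 < ε → ∀ x₁ x₂ y : X, x₁ ≠ y → 2 * dist x₁ x₂ ≤ dist x₁ y →
      ‖tk η K ε x₁ y - tk η K ε x₂ y‖ ≤ C₃ * dist x₁ x₂ ^ γ / dist x₁ y ^ (n + γ) := by
  obtain ⟨L, hL0, hL⟩ := eta_lip η hη
  refine ⟨C₂ + 2 * L * (C₁ * 2 ^ n), by positivity, ?_⟩
  intro ε hε x₁ x₂ y hxy h2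
  have hd : 0 < dist x₁ y := dist_pos.2 hxy
  have t1 := dist_triangle x₁ x₂ y
  have t2 := dist_triangle x₂ x₁ y
  rw [dist_comm x₂ x₁] at t2
  have hd2 : 0 < dist x₂ y := by linarith
  have hδ : 0 ≤ dist x₁ x₂ := dist_nonneg
  have hK2 : ‖K x₂ y‖ ≤ C₁ * 2 ^ n / dist x₁ y ^ n := by
    refine (hS1 x₂ y (dist_pos.1 hd2)).trans ?_
    rw [div_le_div_iff₀ (by positivity) (by positivity), mul_assoc,
      ← Real.mul_rpow (by norm_num) dist_nonneg]
    gcongr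
    linarith
  have hη2 : |η (dist x₁ y / ε) - η (dist x₂ y / ε)| ≤ 2 * L * (dist x₁ x₂ / dist x₁ y) ^ γ := by
    by_cases hc : 2 * ε ≤ dist x₁ y
    · rw [hηhi _ ((one_le_div hε).2 (by linarith)), hηhi _ ((one_le_div hε).2 (by linarith))]
      simp; positivity
    · push Not at hc
      refine (hL _ ⟨by positivity, ?_⟩ _ ⟨by positivity, ?_⟩).trans ?_
      · rw [div_le_iff₀ hε]; linarith
      · rw [div_le_iff₀ hε]; linarith
      · rw [mul_comm 2 L, mul_assoc]
        gcongr
        have e1 : dist x₁ x₂ / dist x₁ y ≤ (dist x₁ x₂ / dist x₁ y) ^ γ := by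
          apply Real.self_le_rpow_of_le_one (by positivity) _ hγ1
          rw [div_le_one hd]; linarith
        refine le_trans ?_ (mul_le_mul_of_nonneg_left e1 (by norm_num))
        rw [← sub_div, abs_div, abs_of_pos hε, div_le_iff₀ hε]
        have : |dist x₁ y - dist x₂ y| ≤ dist x₁ x₂ := by
          rw [abs_le]; constructor <;> linarith
        refine this.trans ?_
        rw [show 2 * (dist x₁ x₂ / dist x₁ y) * ε = dist x₁ x₂ * ((2 * ε) / dist x₁ y) by ring]
        apply le_mul_of_one_le_right hδ
        rw [one_le_div hd]; exact hc.le
  have e : tk η K ε x₁ y - tk η K ε x₂ y = (η (dist x₁ y / ε) : ℂ) * (K x₁ y - K x₂ y)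
      + ((η (dist x₁ y / ε) - η (dist x₂ y / ε) : ℝ) : ℂ) * K x₂ y := by
    simp only [tk]; push_cast; ring
  rw [e]
  refine (norm_add_le _ _).trans ?_
  rw [norm_mul, norm_mul, Complex.norm_real, Complex.norm_real, Real.norm_of_nonneg (hη0 _),
    Real.norm_eq_abs]
  calc _ ≤ 1 * (C₂ * dist x₁ x₂ ^ γ / dist x₁ y ^ (n + γ))
        + (2 * L * (dist x₁ x₂ / dist x₁ y) ^ γ) * (C₁ * 2 ^ n / dist x₁ y ^ n) := by
        gcongr
        · exact hη1 _
        · exact hS2 _ _ _ hxy h2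
    _ = _ := by
        rw [Real.div_rpow hδ hd.le, Real.rpow_add hd]
        field_simp

/-- Λ_β ball of radius M -/
def HB {X : Type*} [MetricSpace X] (β : ℝ) (f : X → ℂ) (M : ℝ) : Prop :=
  (∀ x, ‖f x‖ ≤ M) ∧ ∀ x y : X, ‖f x - f y‖ ≤ M * dist x y ^ β

lemma HB.continuous {X : Type*} [MetricSpace X] {β : ℝ} (hβ : 0 < β) {f : X → ℂ} {M : ℝ}
    (h : HB β f M) : Continuous f := by
  rw [continuous_iff_continuousAt]
  intro x
  rw [ContinuousAt, tendsto_iff_norm_sub_tendsto_zero]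
  have : Filter.Tendsto (fun y => M * dist y x ^ β) (nhds x) (nhds 0) := by
    have h1 : Continuous (fun y => M * dist y x ^ β) := by
      refine continuous_const.mul ?_
      exact (continuous_id.dist continuous_const).rpow_const (fun _ => Or.inr hβ.le)
    have := h1.tendsto x
    simpa [Real.zero_rpow hβ.ne'] using this
  exact squeeze_zero (fun _ => norm_nonneg _) (fun y => h.2 y x) this

lemma norm_int_le {X : Type*} [MeasurableSpace X] (μ : Measure X) (S : Set X)
    (hS : MeasurableSet S) (g : X → ℂ) (h : X → ℝ) (c B : ℝ) (hc : 0 ≤ c) (hB : 0 ≤ B)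
    (hg : ∀ y ∈ S, ‖g y‖ ≤ c * h y)
    (hh : ∫⁻ y in S, ENNReal.ofReal (h y) ∂μ ≤ ENNReal.ofReal B) :
    ‖∫ y in S, g y ∂μ‖ ≤ c * B := by
  have : ‖∫ y in S, g y ∂μ‖ₑ ≤ ENNReal.ofReal (c * B) := by
    calc _ ≤ ∫⁻ y in S, ‖g y‖ₑ ∂μ := enorm_integral_le_lintegral_enorm _
      _ ≤ ∫⁻ y in S, ENNReal.ofReal c * ENNReal.ofReal (h y) ∂μ := by
        refine setLIntegral_mono' hS ?_
        intro y hy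
        rw [← ENNReal.ofReal_mul hc, ← ofReal_norm]
        exact ENNReal.ofReal_le_ofReal (hg y hy)
      _ = ENNReal.ofReal c * ∫⁻ y in S, ENNReal.ofReal (h y) ∂μ := by
        rw [lintegral_const_mul' _ _ ENNReal.ofReal_ne_top]
      _ ≤ ENNReal.ofReal c * ENNReal.ofReal B := by gcongr
      _ = _ := (ENNReal.ofReal_mul hc).symm
  rw [← ofReal_norm] at this
  exact (ENNReal.ofReal_le_ofReal_iff (by positivity)).1 this

theorem T1 {X : Type*} [MetricSpace X] [MeasurableSpace X]
    [BorelSpace X] [SecondCountableTopology X]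
    (μ : Measure X) (n A γ β : ℝ) (hn : 0 < n) (hA : 0 < A)
    (hγ : 0 < γ) (hγ1 : γ ≤ 1) (hβ : 0 < β) (hβn : β < n) (hβγ : β < γ)
    (growth : ∀ (x : X) (r : ℝ), 0 < r → μ (ball x r) ≤ ENNReal.ofReal (A * r ^ n))
    [IsFiniteMeasure μ]
    (K : X → X → ℂ) (hKm : Measurable (Function.uncurry K)) (C₁ C₂ : ℝ)
    (hC₁ : 0 ≤ C₁) (hC₂ : 0 ≤ C₂)
    (hS1 : ∀ x y : X, x ≠ y → ‖K x y‖ ≤ C₁ / dist x y ^ n)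
    (hS2 : ∀ x₁ x₂ y : X, x₁ ≠ y → 2 * dist x₁ x₂ ≤ dist x₁ y →
      ‖K x₁ y - K x₂ y‖ ≤ C₂ * dist x₁ x₂ ^ γ / dist x₁ y ^ (n + γ))
    (η : ℝ → ℝ) (hη : ContDiff ℝ 1 η) (hη0 : ∀ s, 0 ≤ η s) (hη1 : ∀ s, η s ≤ 1)
    (hηlo : ∀ s : ℝ, s ≤ 1 / 2 → η s = 0) (hηhi : ∀ s : ℝ, 1 ≤ s → η s = 1)
    (C' : ℝ) (hC' : 0 ≤ C')
    (hT1 : ∀ ε : ℝ, 0 < ε → HB β (fun x => ∫ y, tk η K ε x y ∂μ) C') :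
    ∃ D : ℝ, 0 ≤ D ∧ ∀ ε : ℝ, 0 < ε → ∀ (f : X → ℂ) (M : ℝ), HB β f M →
      HB β (fun x => ∫ y, tk η K ε x y * f y ∂μ) (D * M) := by
  obtain ⟨CI, hCI0, hCI⟩ := int_small μ n A β hA hβ hβn growth
  obtain ⟨CJ, hCJ0, hCJ⟩ := int_large μ n A γ β hn hA hβγ growth
  obtain ⟨C₃, hC₃, hS3⟩ := tk_S2 n γ hn hγ hγ1 K C₁ C₂ hC₁ hC₂ hS1 hS2 η hη hη0 hη1 hηhi
  have hb1 := tk_S1 n hn K C₁ hC₁ hS1 η hη0 hη1 hηlo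
  have hb2 := tk_bound n hn K C₁ hC₁ hS1 η hη0 hη1 hηlo
  -- bounds
  have hkf : ∀ ε : ℝ, 0 < ε → ∀ x : X, Measurable (tk η K ε x) := fun ε hε x =>
    (tk_meas η hη.continuous K hKm ε).of_uncurry_left
  have hint : ∀ ε : ℝ, 0 < ε → ∀ (x : X) (g : X → ℂ), Continuous g → (∃ M, ∀ y, ‖g y‖ ≤ M) →
      Integrable (fun y => tk η K ε x y * g y) μ := by
    intro ε hε x g hg ⟨M, hM⟩
    refine Integrable.of_bound (C := (C₁ * 2 ^ n / ε ^ n) * M)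
      ((hkf ε hε x).mul hg.measurable).aestronglyMeasurable ?_
    refine Filter.Eventually.of_forall fun y => ?_
    rw [norm_mul]
    gcongr
    · exact hb2 ε hε x y
    · exact hM y
  have hint1 : ∀ ε : ℝ, 0 < ε → ∀ (x : X), Integrable (fun y => tk η K ε x y) μ := by
    intro ε hε x
    simpa using hint ε hε x (fun _ => 1) continuous_const ⟨1, by simp⟩
  set V : ℝ := CI + μ.real Set.univ with hV
  have hV0 : 0 ≤ V := by positivity
  -- product bound
  have hprod : ∀ (ε : ℝ) (f : X → ℂ) (M : ℝ), HB β f M → 0 ≤ M → ∀ x y : X,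
      ‖tk η K ε x y * (f y - f x)‖ ≤ (C₁ * M) * dist x y ^ (β - n) := by
    intro ε f M hf hM x y
    rw [norm_mul]
    rcases eq_or_ne x y with rfl | hxy
    · simp; positivity
    have hd : 0 < dist x y := dist_pos.2 hxy
    calc _ ≤ (C₁ / dist x y ^ n) * (M * dist x y ^ β) := by
          gcongr
          · exact hb1 ε x y
          · rw [dist_comm]; exact hf.2 y x
      _ = _ := by rw [Real.rpow_sub hd]; field_simp
  -- ball integral bound
  have hballb : ∀ ε : ℝ, 0 < ε → ∀ x₁ x₂ : X, dist x₁ x₂ ≤ ε → 0 < dist x₁ x₂ → 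
      ‖∫ y in ball x₁ (2 * dist x₁ x₂), tk η K ε x₂ y ∂μ‖ ≤ C₁ * 2 ^ n * (A * 2 ^ n) := by
    intro ε hε x₁ x₂ hle hδ
    have := norm_int_le μ (ball x₁ (2 * dist x₁ x₂)) measurableSet_ball (tk η K ε x₂)
      (fun _ => 1) (C₁ * 2 ^ n / ε ^ n) (A * (2 * dist x₁ x₂) ^ n) (by positivity) (by positivity)
      (fun y _ => by simpa using hb2 ε hε x₂ y) (by simpa using growth x₁ _ (by positivity))
    refine this.trans ?_
    rw [Real.mul_rpow (by norm_num) hδ.le]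
    calc _ = C₁ * 2 ^ n * (A * 2 ^ n) * (dist x₁ x₂ ^ n / ε ^ n) := by field_simp
      _ ≤ C₁ * 2 ^ n * (A * 2 ^ n) * 1 := by
        gcongr
        rw [div_le_one (by positivity)]
        gcongr
      _ = _ := mul_one _
  have hball : ∀ ε : ℝ, 0 < ε → ∀ x₁ x₂ : X, 0 < dist x₁ x₂ → 
      ‖∫ y in ball x₁ (2 * dist x₁ x₂), tk η K ε x₂ y ∂μ‖
        ≤ 2 * C' + C₁ * 2 ^ n * (A * 2 ^ n) := by
    intro ε hε x₁ x₂ hδ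
    rcases le_total (dist x₁ x₂) ε with hle | hle
    · linarith [hballb ε hε x₁ x₂ hle hδ]
    · set B := ball x₁ (2 * dist x₁ x₂) with hB
      have e1 := integral_add_compl (μ := μ) (s := B) measurableSet_ball (hint1 ε hε x₂)
      have e2 := integral_add_compl (μ := μ) (s := B) measurableSet_ball
        (hint1 (dist x₁ x₂) hδ x₂)
      have e3 : ∫ y in Bᶜ, tk η K ε x₂ y ∂μ = ∫ y in Bᶜ, tk η K (dist x₁ x₂) x₂ y ∂μ := by
        refine setIntegral_congr_fun measurableSet_ball.compl ?_
        intro y hy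
        rw [hB, Set.mem_compl_iff, mem_ball, not_lt] at hy
        have t1 := dist_triangle x₁ x₂ y
        rw [dist_comm y x₁] at hy
        have : dist x₁ x₂ ≤ dist x₂ y := by linarith
        simp only [tk]
        rw [hηhi _ ((one_le_div hε).2 (by linarith)), hηhi _ ((one_le_div hδ).2 this)]
      have e4 : ∫ y in B, tk η K ε x₂ y ∂μ = (∫ y, tk η K ε x₂ y ∂μ)
          - (∫ y, tk η K (dist x₁ x₂) x₂ y ∂μ) + ∫ y in B, tk η K (dist x₁ x₂) x₂ y ∂μ := by
        rw [← e1, ← e2, e3]; ring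
      rw [e4]
      refine (norm_add_le _ _).trans ?_
      have := norm_sub_le (∫ y, tk η K ε x₂ y ∂μ) (∫ y, tk η K (dist x₁ x₂) x₂ y ∂μ)
      have h1 := (hT1 ε hε).1 x₂
      have h2 := (hT1 _ hδ).1 x₂
      have h3 := hballb _ hδ x₁ x₂ le_rfl hδ
      simp only at h1 h2
      linarith
  set D1 : ℝ := C' + C₁ * V with hD1
  set D2 : ℝ := C₁ * (CI * 2 ^ β) + C₁ * (CI * 3 ^ β) + (2 * C' + C₁ * 2 ^ n * (A * 2 ^ n))
    + C₃ * CJ + C' with hD2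
  have hD10 : 0 ≤ D1 := by positivity
  have hD20 : 0 ≤ D2 := by positivity
  refine ⟨D1 + D2, by positivity, ?_⟩
  intro ε hε f M hf
  have hfc := hf.continuous hβ
  constructor
  · intro x
    have hM : 0 ≤ M := (norm_nonneg _).trans (hf.1 x)
    have e : ∫ y, tk η K ε x y * f y ∂μ = f x * (∫ y, tk η K ε x y ∂μ)
        + ∫ y, tk η K ε x y * (f y - f x) ∂μ := by
      rw [← integral_const_mul, ← integral_add ((hint1 ε hε x).const_mul _)
        (hint ε hε x (fun y => f y - f x) (hfc.sub continuous_const) ⟨M + M, fun y => (norm_sub_le _ _).trans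
          (add_le_add (hf.1 y) (hf.1 x))⟩)]
      congr 1; ext y; ring
    have hlint : ∫⁻ y in Set.univ, ENNReal.ofReal (dist x y ^ (β - n)) ∂μ ≤ ENNReal.ofReal V := by
      rw [Measure.restrict_univ, ← lintegral_add_compl _ (measurableSet_ball (x := x) (ε := 1)), hV,
        ENNReal.ofReal_add hCI0 (by positivity)]
      gcongr
      · simpa using hCI x 1 one_pos
      · calc _ ≤ ∫⁻ y in (ball x 1)ᶜ, 1 ∂μ := by
              refine setLIntegral_mono' measurableSet_ball.compl ?_
              intro y hy
              rw [Set.mem_compl_iff, mem_ball, not_lt, dist_comm] at hy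
              rw [ENNReal.ofReal_le_one]
              exact Real.rpow_le_one_of_one_le_of_nonpos hy (by linarith)
          _ ≤ μ Set.univ := by simp; exact measure_mono (Set.subset_univ _)
          _ = _ := by simp [Measure.real]
    have h2 := norm_int_le μ Set.univ MeasurableSet.univ (fun y => tk η K ε x y * (f y - f x))
      (fun y => dist x y ^ (β - n)) (C₁ * M) V (by positivity) hV0
      (fun y _ => hprod ε f M hf hM x y) hlint
    rw [Measure.restrict_univ] at h2
    show ‖∫ y, tk η K ε x y * f y ∂μ‖ ≤ _
    rw [e]
    refine (norm_add_le _ _).trans ?_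
    rw [norm_mul]
    calc _ ≤ M * C' + C₁ * M * V := by
          gcongr
          · exact hf.1 x
          · exact (hT1 ε hε).1 x
      _ = D1 * M := by rw [hD1]; ring
      _ ≤ _ := by gcongr; linarith
  · intro x₁ x₂
    have hM : 0 ≤ M := (norm_nonneg _).trans (hf.1 x₁)
    rcases eq_or_ne x₁ x₂ with rfl | hne
    · simp; positivity
    have hδ : 0 < dist x₁ x₂ := dist_pos.2 hne
    set δ := dist x₁ x₂ with hδd
    have hg : ∀ z : X, Continuous (fun y => f y - f z) := fun z => hfc.sub continuous_const
    have hgb : ∀ z : X, ∃ M', ∀ y, ‖f y - f z‖ ≤ M' := fun z => ⟨M + M, fun y =>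
      (norm_sub_le _ _).trans (add_le_add (hf.1 y) (hf.1 z))⟩
    have i11 := hint ε hε x₁ _ (hg x₁) (hgb x₁)
    have i21 := hint ε hε x₂ _ (hg x₁) (hgb x₁)
    have i22 := hint ε hε x₂ _ (hg x₂) (hgb x₂)
    have e0 : ∀ x : X, ∫ y, tk η K ε x y * f y ∂μ = f x₁ * (∫ y, tk η K ε x y ∂μ)
        + ∫ y, tk η K ε x y * (f y - f x₁) ∂μ := by
      intro x
      rw [← integral_const_mul, ← integral_add ((hint1 ε hε x).const_mul _)
        (hint ε hε x _ (hg x₁) (hgb x₁))]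
      congr 1; ext y; ring
    set B := ball x₁ (2 * δ) with hB
    have hBm : MeasurableSet B := measurableSet_ball
    have s1 := integral_add_compl hBm i11
    have s2 := integral_add_compl hBm i21
    have s3 : ∫ y in B, tk η K ε x₂ y * (f y - f x₁) ∂μ =
        ∫ y in B, tk η K ε x₂ y * (f y - f x₂) ∂μ
          + (f x₂ - f x₁) * ∫ y in B, tk η K ε x₂ y ∂μ := by
      rw [← integral_const_mul, ← integral_add i22.integrableOn
        ((hint1 ε hε x₂).const_mul _).integrableOn]
      congr 1; ext y; ring
    have s4 : ∫ y in Bᶜ, (tk η K ε x₁ y - tk η K ε x₂ y) * (f y - f x₁) ∂μ =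
        ∫ y in Bᶜ, tk η K ε x₁ y * (f y - f x₁) ∂μ
          - ∫ y in Bᶜ, tk η K ε x₂ y * (f y - f x₁) ∂μ := by
      rw [← integral_sub i11.integrableOn i21.integrableOn]
      congr 1; ext y; ring
    have etot : ∫ y, tk η K ε x₁ y * f y ∂μ - ∫ y, tk η K ε x₂ y * f y ∂μ =
        ∫ y in B, tk η K ε x₁ y * (f y - f x₁) ∂μ
        - ∫ y in B, tk η K ε x₂ y * (f y - f x₂) ∂μ
        - (f x₂ - f x₁) * ∫ y in B, tk η K ε x₂ y ∂μ
        + ∫ y in Bᶜ, (tk η K ε x₁ y - tk η K ε x₂ y) * (f y - f x₁) ∂μ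
        + f x₁ * (∫ y, tk η K ε x₁ y ∂μ - ∫ y, tk η K ε x₂ y ∂μ) := by
      rw [e0 x₁, e0 x₂, ← s1, ← s2, s3, s4]; ring
    have b1 : ‖∫ y in B, tk η K ε x₁ y * (f y - f x₁) ∂μ‖ ≤ C₁ * M * (CI * (2 * δ) ^ β) :=
      norm_int_le μ B hBm _ (fun y => dist x₁ y ^ (β - n)) _ _ (by positivity) (by positivity)
        (fun y _ => hprod ε f M hf hM x₁ y) (hCI x₁ (2 * δ) (by positivity))
    have b2 : ‖∫ y in B, tk η K ε x₂ y * (f y - f x₂) ∂μ‖ ≤ C₁ * M * (CI * (3 * δ) ^ β) := by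
      refine norm_int_le μ B hBm _ (fun y => dist x₂ y ^ (β - n)) _ _ (by positivity) (by positivity)
        (fun y _ => hprod ε f M hf hM x₂ y) (le_trans ?_ (hCI x₂ (3 * δ) (by positivity)))
      apply lintegral_mono_set
      apply ball_subset_ball'
      rw [← hδd]; linarith
    have b3 : ‖(f x₂ - f x₁) * ∫ y in B, tk η K ε x₂ y ∂μ‖
        ≤ (M * δ ^ β) * (2 * C' + C₁ * 2 ^ n * (A * 2 ^ n)) := by
      rw [norm_mul]
      gcongr
      · rw [hδd, dist_comm]; exact hf.2 x₂ x₁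
      · exact hball ε hε x₁ x₂ hδ
    have b4 : ‖∫ y in Bᶜ, (tk η K ε x₁ y - tk η K ε x₂ y) * (f y - f x₁) ∂μ‖
        ≤ (C₃ * δ ^ γ * M) * (CJ * (2 * δ) ^ (β - γ)) := by
      refine norm_int_le μ Bᶜ hBm.compl _ (fun y => dist x₁ y ^ (β - γ - n)) _ _ (by positivity)
        (by positivity) ?_ (hCJ x₁ (2 * δ) (by positivity))
      intro y hy
      rw [hB, Set.mem_compl_iff, mem_ball, not_lt, dist_comm] at hy
      have hd : 0 < dist x₁ y := by linarith
      rw [norm_mul]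
      calc _ ≤ (C₃ * δ ^ γ / dist x₁ y ^ (n + γ)) * (M * dist x₁ y ^ β) := by
            gcongr
            · exact hS3 ε hε x₁ x₂ y (dist_pos.1 hd) hy
            · rw [dist_comm]; exact hf.2 y x₁
        _ = _ := by
            rw [Real.rpow_add hd, Real.rpow_sub hd, Real.rpow_sub hd]
            field_simp
    have b5 : ‖f x₁ * (∫ y, tk η K ε x₁ y ∂μ - ∫ y, tk η K ε x₂ y ∂μ)‖ ≤ M * (C' * δ ^ β) := by
      rw [norm_mul]
      gcongr
      · exact hf.1 x₁
      · exact (hT1 ε hε).2 x₁ x₂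
    have b4' : (C₃ * δ ^ γ * M) * (CJ * (2 * δ) ^ (β - γ)) ≤ C₃ * CJ * M * δ ^ β := by
      have h2 : (2:ℝ) ^ (β - γ) ≤ 1 :=
        Real.rpow_le_one_of_one_le_of_nonpos (by norm_num) (by linarith)
      rw [Real.mul_rpow (by norm_num) hδ.le]
      have : δ ^ γ * δ ^ (β - γ) = δ ^ β := by rw [← Real.rpow_add hδ]; ring_nf
      calc _ = C₃ * CJ * M * (δ ^ γ * δ ^ (β - γ)) * 2 ^ (β - γ) := by ring
        _ ≤ C₃ * CJ * M * (δ ^ γ * δ ^ (β - γ)) * 1 := by gcongr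
        _ = _ := by rw [this, mul_one]
    rw [Real.mul_rpow (by norm_num) hδ.le] at b1 b2
    show ‖∫ y, tk η K ε x₁ y * f y ∂μ - ∫ y, tk η K ε x₂ y * f y ∂μ‖ ≤ _
    rw [etot]
    refine (norm_add_le _ _).trans ?_
    refine (add_le_add (norm_add_le _ _) le_rfl).trans ?_
    refine (add_le_add (add_le_add (norm_sub_le _ _) le_rfl) le_rfl).trans ?_
    refine (add_le_add (add_le_add (add_le_add (norm_sub_le _ _) le_rfl) le_rfl) le_rfl).trans ?_
    calc _ ≤ D2 * M * δ ^ β := by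
          rw [hD2]
          linarith
      _ ≤ _ := by gcongr; linarith

lemma krein {H : Type*} [NormedAddCommGroup H] [InnerProductSpace ℂ H] [CompleteSpace H]
    (S : H →L[ℂ] H) (hS : IsSelfAdjoint S) (f : H) (c D : ℝ) (hD : 0 ≤ D)
    (h : ∀ m : ℕ, ‖(S ^ m) f‖ ≤ c * D ^ m) : ‖S f‖ ≤ D * ‖f‖ := by
  set a : ℕ → ℝ := fun m => ‖(S ^ m) f‖ with ha
  have hstep : ∀ m, (S ^ (m+1)) f = S ((S ^ m) f) := by
    intro m; rw [pow_succ']; rfl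
  have hlog : ∀ m, a (m+1) ^ 2 ≤ a m * a (m+2) := by
    intro m
    have h1 : (inner ℂ ((S ^ (m+1)) f) ((S ^ (m+1)) f) : ℂ)
        = inner ℂ ((S ^ m) f) ((S ^ (m+2)) f) := by
      rw [hstep (m+1), hstep m]
      have := ContinuousLinearMap.adjoint_inner_left S (S ((S ^ m) f)) ((S ^ m) f)
      rw [hS.adjoint_eq] at this
      exact this
    calc a (m+1) ^ 2 = ‖(inner ℂ ((S ^ (m+1)) f) ((S ^ (m+1)) f) : ℂ)‖ := by
          rw [inner_self_eq_norm_sq_to_K]; simp [ha]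
      _ = ‖(inner ℂ ((S ^ m) f) ((S ^ (m+2)) f) : ℂ)‖ := by rw [h1]
      _ ≤ _ := norm_inner_le_norm _ _
  have ha0 : ∀ m, 0 ≤ a m := fun m => norm_nonneg _
  by_contra hcon
  push Not at hcon
  have a0 : a 0 = ‖f‖ := by simp [ha]
  have a1 : a 1 = ‖S f‖ := by simp [ha]
  rw [← a0, ← a1] at hcon
  have hf0 : 0 < a 0 := by
    rcases (ha0 0).eq_or_lt with h0 | h0
    · rw [a0] at h0
      have : f = 0 := norm_eq_zero.1 h0.symm
      rw [a1, a0, this] at hcon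
      simp at hcon
    · exact h0
  set q := a 1 / a 0 with hq
  have hqD : D < q := by rw [hq, lt_div_iff₀ hf0]; exact hcon
  have hq0 : 0 < q := by linarith
  have key : ∀ m, 0 < a m ∧ q * a m ≤ a (m+1) := by
    intro m
    induction m with
    | zero => exact ⟨hf0, by rw [hq]; field_simp; exact le_rfl⟩
    | succ k ih =>
      obtain ⟨p, ih⟩ := ih
      have p' : 0 < a (k+1) := lt_of_lt_of_le (by positivity) ih
      refine ⟨p', ?_⟩
      have hl := hlog k
      have : a k * (q * a (k+1)) ≤ a k * a (k+1+1) := by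
        nlinarith
      exact le_of_mul_le_mul_left this p
  have key2 : ∀ m, q ^ m * a 0 ≤ a m := by
    intro m
    induction m with
    | zero => simp
    | succ k ih =>
      have := (key k).2
      calc _ = q * (q ^ k * a 0) := by ring
        _ ≤ q * a k := by gcongr
        _ ≤ _ := this
  have hc : 0 < c := by
    have := h 0
    simp at this
    rw [a0] at hf0
    linarith
  have hb : ∀ m : ℕ, a 0 ≤ c * (D / q) ^ m := by
    intro m
    have := (key2 m).trans (h m)
    rw [div_pow, ← mul_div_assoc, le_div_iff₀ (by positivity)]
    linarith
  have hlim : Filter.Tendsto (fun m : ℕ => c * (D / q) ^ m) Filter.atTop (nhds (c * 0)) :=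
    (tendsto_pow_atTop_nhds_zero_of_lt_one (by positivity) ((div_lt_one hq0).2 hqD)).const_mul c
  have := ge_of_tendsto' hlim hb
  linarith

section
variable {X : Type*} [MeasurableSpace X] (μ : Measure X) [IsFiniteMeasure μ]

lemma int_ker {k : X → X → ℂ} (hk : Measurable (Function.uncurry k)) {B : ℝ}
    (hB : ∀ x y, ‖k x y‖ ≤ B) {f : X → ℂ} (hf : Integrable f μ) (x : X) :
    Integrable (fun y => k x y * f y) μ :=
  hf.bdd_mul (c := B) hk.of_uncurry_left.aestronglyMeasurable (Filter.Eventually.of_forall (hB x))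

lemma memLp_ker {k : X → X → ℂ} (hk : Measurable (Function.uncurry k)) {B : ℝ}
    (hB : ∀ x y, ‖k x y‖ ≤ B) {f : X → ℂ} (hfm : StronglyMeasurable f) (hf : Integrable f μ) :
    (∀ x, ‖∫ y, k x y * f y ∂μ‖ ≤ B * ∫ y, ‖f y‖ ∂μ) ∧
    MemLp (fun x => ∫ y, k x y * f y ∂μ) 2 μ := by
  have h1 : ∀ x, ‖∫ y, k x y * f y ∂μ‖ ≤ B * ∫ y, ‖f y‖ ∂μ := by
    intro x
    rw [← integral_const_mul]
    refine norm_integral_le_of_norm_le (hf.norm.const_mul B) (Filter.Eventually.of_forall ?_)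
    intro y
    simp only [norm_mul]
    gcongr
    exact hB x y
  refine ⟨h1, MemLp.of_bound ?_ _ (Filter.Eventually.of_forall h1)⟩
  have : StronglyMeasurable (fun p : X × X => k p.1 p.2 * f p.2) :=
    hk.stronglyMeasurable.mul (hfm.comp_measurable measurable_snd)
  exact (this.integral_prod_right (ν := μ)).aestronglyMeasurable

lemma l1_le (F : Lp ℂ 2 μ) : Integrable F μ ∧ ∫ y, ‖F y‖ ∂μ ≤ μ.real Set.univ ^ (1/2:ℝ) * ‖F‖ := by
  have hF := Lp.memLp F
  have h1 : MemLp F 1 μ := hF.mono_exponent one_le_two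
  refine ⟨memLp_one_iff_integrable.1 h1, ?_⟩
  have := eLpNorm_le_eLpNorm_mul_rpow_measure_univ (p := 1) (q := 2) (μ := μ) (f := F)
    one_le_two hF.1
  rw [integral_norm_eq_lintegral_enorm hF.1, ← eLpNorm_one_eq_lintegral_enorm]
  have h2 := ENNReal.toReal_mono (ENNReal.mul_ne_top hF.eLpNorm_ne_top
    (ENNReal.rpow_ne_top_of_nonneg (by norm_num) (measure_ne_top _ _))) this
  refine h2.trans ?_
  rw [ENNReal.toReal_mul, Lp.norm_def, mul_comm, ← ENNReal.toReal_rpow]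
  norm_num [Measure.real]

theorem exists_op {k : X → X → ℂ} (hk : Measurable (Function.uncurry k)) {B : ℝ}
    (hB0 : 0 ≤ B) (hB : ∀ x y, ‖k x y‖ ≤ B) :
    ∃ T : Lp ℂ 2 μ →L[ℂ] Lp ℂ 2 μ, ∀ (F : Lp ℂ 2 μ) (f : X → ℂ), (F =ᵐ[μ] f) →
      T F =ᵐ[μ] fun x => ∫ y, k x y * f y ∂μ := by
  have hm := fun F : Lp ℂ 2 μ => memLp_ker μ hk hB (Lp.stronglyMeasurable F) (l1_le μ F).1
  let T0 : Lp ℂ 2 μ →ₗ[ℂ] Lp ℂ 2 μ := 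
    { toFun := fun F => (hm F).2.toLp _
      map_add' := by
        intro F G
        rw [← MemLp.toLp_add]
        apply MemLp.toLp_congr
        refine Filter.Eventually.of_forall fun x => ?_
        simp only [Pi.add_apply]
        rw [← integral_add (int_ker μ hk hB (l1_le μ F).1 x) (int_ker μ hk hB (l1_le μ G).1 x)]
        apply integral_congr_ae
        filter_upwards [Lp.coeFn_add F G] with y hy
        rw [hy, Pi.add_apply, mul_add]
      map_smul' := by
        intro c F
        rw [RingHom.id_apply, ← MemLp.toLp_const_smul]
        apply MemLp.toLp_congr
        refine Filter.Eventually.of_forall fun x => ?_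
        simp only [Pi.smul_apply, smul_eq_mul]
        rw [← integral_const_mul]
        apply integral_congr_ae
        filter_upwards [Lp.coeFn_smul c F] with y hy
        rw [hy, Pi.smul_apply, smul_eq_mul]; ring }
  let T := T0.mkContinuous (μ.real Set.univ ^ (1/2:ℝ) * (B * μ.real Set.univ ^ (1/2:ℝ))) (by
    intro F
    have h1 := Lp.norm_le_of_ae_bound (μ := μ) (p := 2) (f := T0 F)
      (C := B * (μ.real Set.univ ^ (1/2:ℝ) * ‖F‖)) (by positivity) (by
        filter_upwards [(hm F).2.coeFn_toLp] with x hx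
        have : (T0 F) x = ∫ y, k x y * F y ∂μ := hx
        rw [this]
        refine ((hm F).1 x).trans ?_
        gcongr
        exact (l1_le μ F).2)
    refine h1.trans (le_of_eq ?_)
    simp [measureUnivNNReal, Measure.real, ENNReal.coe_toNNReal_eq_toReal]
    ring)
  refine ⟨T, ?_⟩
  intro F f hFf
  have : T F =ᵐ[μ] fun x => ∫ y, k x y * F y ∂μ := (hm F).2.coeFn_toLp
  filter_upwards [this] with x hx
  rw [hx]
  apply integral_congr_ae
  filter_upwards [hFf] with y hy
  rw [hy]

theorem op_adj {k k' : X → X → ℂ} (hk : Measurable (Function.uncurry k)) {B : ℝ}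
    (hB : ∀ x y, ‖k x y‖ ≤ B) (hk' : ∀ x y, k' x y = (starRingEnd ℂ) (k y x))
    (T T' : Lp ℂ 2 μ →L[ℂ] Lp ℂ 2 μ) 
    (hT : ∀ (F : Lp ℂ 2 μ) (f : X → ℂ), (F =ᵐ[μ] f) → T F =ᵐ[μ] fun x => ∫ y, k x y * f y ∂μ)
    (hT' : ∀ (F : Lp ℂ 2 μ) (f : X → ℂ), (F =ᵐ[μ] f) → T' F =ᵐ[μ] fun x => ∫ y, k' x y * f y ∂μ) :
    T' = ContinuousLinearMap.adjoint T := by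
  rw [ContinuousLinearMap.eq_adjoint_iff]
  intro F G
  rw [L2.inner_def, L2.inner_def]
  have e1 : ∫ a, inner ℂ ((T' F) a) (G a) ∂μ
      = ∫ a, ∫ b, k b a * (starRingEnd ℂ) (F b) * G a ∂μ ∂μ := by
    apply integral_congr_ae
    filter_upwards [hT' F F (Filter.EventuallyEq.refl _ _)] with a ha
    rw [ha, RCLike.inner_apply, ← integral_conj, mul_comm, ← integral_mul_const]
    congr 1; ext b
    rw [hk']; simp
  have e2 : ∫ a, inner ℂ (F a) ((T G) a) ∂μ
      = ∫ b, ∫ a, k b a * (starRingEnd ℂ) (F b) * G a ∂μ ∂μ := by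
    apply integral_congr_ae
    filter_upwards [hT G G (Filter.EventuallyEq.refl _ _)] with b hb
    rw [hb, RCLike.inner_apply, ← integral_mul_const]
    congr 1; ext a
    ring
  rw [e1, e2]
  refine integral_integral_swap ?_
  have hF := (l1_le μ F).1
  have hG := (l1_le μ G).1
  have hF' : Integrable (fun x => (starRingEnd ℂ) (F x)) μ :=
    hF.congr' (Complex.continuous_conj.comp_aestronglyMeasurable hF.1)
      (Filter.Eventually.of_forall fun x => by simp)
  have hFG := hG.mul_prod hF'
  have hkm : Measurable (fun p : X × X => k p.2 p.1) := hk.comp measurable_swap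
  have := hFG.bdd_mul (c := B) hkm.aestronglyMeasurable
    (Filter.Eventually.of_forall (fun p => hB p.2 p.1))
  refine this.congr (Filter.Eventually.of_forall fun p => ?_)
  simp [Function.uncurry]
  ring
end

end SingInt

/-- Application 1: on a separable finite measure metric space with n-dimensional growth,
if `Λ_β` is dense in `L²(μ)`, `K` is a standard singular integral kernel whose adjoint
kernel `K*(x,y) = conj (K y x)` also satisfies (S2), and the smooth truncations satisfy
`‖T_ε 1‖_{Λ_β} ≤ C'` and `‖T*_ε 1‖_{Λ_β} ≤ C''` for all `ε > 0`, then the `T_ε` are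
uniformly bounded on `L²(μ)` and extend to bounded operators on `L²(μ)`. -/
theorem singular_integral_L2_bounded {X : Type*} [MetricSpace X] [MeasurableSpace X]
    [BorelSpace X] [SecondCountableTopology X]
    (μ : Measure X) (n A γ β : ℝ) (hn : 0 < n) (hA : 0 < A)
    (hγ : 0 < γ) (hγ1 : γ ≤ 1) (hβ : 0 < β) (hβn : β < n) (hβγ : β < γ)
    (growth : ∀ (x : X) (r : ℝ), 0 < r → μ (ball x r) ≤ ENNReal.ofReal (A * r ^ n))
    (hfin : μ Set.univ < ⊤)
    (K : X → X → ℂ) (hKm : Measurable (Function.uncurry K)) (C₁ C₂ : ℝ)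
    (hS1 : ∀ x y : X, x ≠ y → ‖K x y‖ ≤ C₁ / dist x y ^ n)
    (hS2 : ∀ x₁ x₂ y : X, x₁ ≠ y → 2 * dist x₁ x₂ ≤ dist x₁ y →
      ‖K x₁ y - K x₂ y‖ ≤ C₂ * dist x₁ x₂ ^ γ / dist x₁ y ^ (n + γ))
    (hS2star : ∀ x₁ x₂ y : X, x₁ ≠ y → 2 * dist x₁ x₂ ≤ dist x₁ y →
      ‖(starRingEnd ℂ) (K y x₁) - (starRingEnd ℂ) (K y x₂)‖
        ≤ C₂ * dist x₁ x₂ ^ γ / dist x₁ y ^ (n + γ))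
    (η : ℝ → ℝ) (hη : ContDiff ℝ 1 η) (hη0 : ∀ s, 0 ≤ η s) (hη1 : ∀ s, η s ≤ 1)
    (hηlo : ∀ s : ℝ, s ≤ 1 / 2 → η s = 0) (hηhi : ∀ s : ℝ, 1 ≤ s → η s = 1)
    (hdense : Dense {F : Lp ℂ 2 μ | ∃ f : X → ℂ,
      (∃ M L : ℝ, (∀ x, ‖f x‖ ≤ M) ∧ ∀ x y : X, ‖f x - f y‖ ≤ L * dist x y ^ β) ∧
      ∀ᵐ x ∂μ, F x = f x})
    (C' C'' : ℝ)
    (hT1 : ∀ ε : ℝ, 0 < ε →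
      (∀ x : X, ‖∫ y, (η (dist x y / ε) : ℂ) * K x y ∂μ‖ ≤ C') ∧
      (∀ x₁ x₂ : X,
        ‖(∫ y, (η (dist x₁ y / ε) : ℂ) * K x₁ y ∂μ) -
            ∫ y, (η (dist x₂ y / ε) : ℂ) * K x₂ y ∂μ‖ ≤ C' * dist x₁ x₂ ^ β))
    (hT1star : ∀ ε : ℝ, 0 < ε →
      (∀ x : X, ‖∫ y, (η (dist x y / ε) : ℂ) * (starRingEnd ℂ) (K y x) ∂μ‖ ≤ C'') ∧
      (∀ x₁ x₂ : X,
        ‖(∫ y, (η (dist x₁ y / ε) : ℂ) * (starRingEnd ℂ) (K y x₁) ∂μ) -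
            ∫ y, (η (dist x₂ y / ε) : ℂ) * (starRingEnd ℂ) (K y x₂) ∂μ‖
          ≤ C'' * dist x₁ x₂ ^ β)) :
    ∃ C > 0, ∀ ε : ℝ, 0 < ε →
      (∀ f : X → ℂ, Measurable f →
        (∃ M L : ℝ, (∀ x, ‖f x‖ ≤ M) ∧ ∀ x y : X, ‖f x - f y‖ ≤ L * dist x y ^ β) →
        eLpNorm (fun x => ∫ y, (η (dist x y / ε) : ℂ) * K x y * f y ∂μ) 2 μ
          ≤ ENNReal.ofReal C * eLpNorm f 2 μ) ∧
      ∃ T : Lp ℂ 2 μ →L[ℂ] Lp ℂ 2 μ, ‖T‖ ≤ C ∧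
        ∀ (F : Lp ℂ 2 μ) (f : X → ℂ), Measurable f →
          (∃ M L : ℝ, (∀ x, ‖f x‖ ≤ M) ∧ ∀ x y : X, ‖f x - f y‖ ≤ L * dist x y ^ β) →
          (∀ᵐ x ∂μ, F x = f x) →
          ∀ᵐ x ∂μ, (T F) x = ∫ y, (η (dist x y / ε) : ℂ) * K x y * f y ∂μ := by
  have : IsFiniteMeasure μ := ⟨hfin⟩
  set K' : X → X → ℂ := fun x y => (starRingEnd ℂ) (K y x) with hK'
  have hK'm : Measurable (Function.uncurry K') :=
    Complex.continuous_conj.measurable.comp (hKm.comp measurable_swap)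
  have hS1a : ∀ x y : X, x ≠ y → ‖K x y‖ ≤ |C₁| / dist x y ^ n := fun x y h =>
    (hS1 x y h).trans (by gcongr; exact le_abs_self _)
  have hS1b : ∀ x y : X, x ≠ y → ‖K' x y‖ ≤ |C₁| / dist x y ^ n := fun x y h => by
    rw [hK', RCLike.norm_conj, dist_comm]; exact hS1a y x h.symm
  have hC2 : ∀ a b : ℝ, 0 ≤ a → 0 ≤ b → C₂ * a / b ≤ |C₂| * a / b := fun a b ha hb => by
    gcongr; exact le_abs_self _
  have habs : ∀ c a : ℝ, 0 ≤ a → c * a ≤ |c| * a := fun c a ha => by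
    gcongr; exact le_abs_self _
  obtain ⟨D, hD0, hD⟩ := SingInt.T1 μ n A γ β hn hA hγ hγ1 hβ hβn hβγ growth K hKm |C₁| |C₂|
    (abs_nonneg _) (abs_nonneg _) hS1a
    (fun x₁ x₂ y h h2 => (hS2 x₁ x₂ y h h2).trans (hC2 _ _ (by positivity) (by positivity)))
    η hη hη0 hη1 hηlo hηhi |C'| (abs_nonneg _)
    (fun ε hε => ⟨fun x => ((hT1 ε hε).1 x).trans (le_abs_self _),
      fun x y => ((hT1 ε hε).2 x y).trans (habs _ _ (by positivity))⟩)
  obtain ⟨D', hD'0, hD'⟩ := SingInt.T1 μ n A γ β hn hA hγ hγ1 hβ hβn hβγ growth K' hK'm |C₁| |C₂|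
    (abs_nonneg _) (abs_nonneg _) hS1b
    (fun x₁ x₂ y h h2 => (hS2star x₁ x₂ y h h2).trans (hC2 _ _ (by positivity) (by positivity)))
    η hη hη0 hη1 hηlo hηhi |C''| (abs_nonneg _)
    (fun ε hε => ⟨fun x => ((hT1star ε hε).1 x).trans (le_abs_self _),
      fun x y => ((hT1star ε hε).2 x y).trans (habs _ _ (by positivity))⟩)
  refine ⟨Real.sqrt (D' * D) + 1, by positivity, ?_⟩
  intro ε hε
  have hbK := SingInt.tk_bound n hn K |C₁| (abs_nonneg _) hS1a η hη0 hη1 hηlo ε hε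
  have hbK' := SingInt.tk_bound n hn K' |C₁| (abs_nonneg _) hS1b η hη0 hη1 hηlo ε hε
  have hmK := SingInt.tk_meas η hη.continuous K hKm ε
  have hmK' := SingInt.tk_meas η hη.continuous K' hK'm ε
  obtain ⟨T, hT⟩ := SingInt.exists_op μ hmK (by positivity) hbK
  obtain ⟨T', hT'⟩ := SingInt.exists_op μ hmK' (by positivity) hbK'
  have hadj : T' = ContinuousLinearMap.adjoint T := by
    refine SingInt.op_adj μ hmK hbK ?_ T T' hT hT'
    intro x y
    simp [SingInt.tk, hK', dist_comm]
  set S : Lp ℂ 2 μ →L[ℂ] Lp ℂ 2 μ := T' ∘L T with hS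
  have hSa : IsSelfAdjoint S := by
    rw [hS, hadj, ContinuousLinearMap.isSelfAdjoint_iff', ContinuousLinearMap.adjoint_comp,
      ContinuousLinearMap.adjoint_adjoint]
  have hiter : ∀ (F : Lp ℂ 2 μ) (f : X → ℂ) (M : ℝ), F =ᵐ[μ] f → SingInt.HB β f M → ∀ m : ℕ,
      ∃ g : X → ℂ, (S ^ m) F =ᵐ[μ] g ∧ SingInt.HB β g (M * (D' * D) ^ m) := by
    intro F f M hF hf m
    induction m with
    | zero => exact ⟨f, by simpa using hF, by simpa using hf⟩
    | succ k ih =>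
      obtain ⟨g, hg1, hg2⟩ := ih
      have h1 := hT _ _ hg1
      have h2 := hT' _ _ h1
      have h3 := hD' ε hε _ _ (hD ε hε _ _ hg2)
      rw [show M * (D' * D) ^ (k+1) = D' * (D * (M * (D' * D) ^ k)) by ring]
      refine ⟨_, ?_, h3⟩
      rw [pow_succ']
      exact h2
  have hSd : ∀ F : Lp ℂ 2 μ, ‖S F‖ ≤ (D' * D) * ‖F‖ := by
    have hcl : IsClosed {F : Lp ℂ 2 μ | ‖S F‖ ≤ (D' * D) * ‖F‖} :=
      isClosed_le S.continuous.norm (continuous_const.mul continuous_norm)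
    have hsub := closure_minimal (s := {F : Lp ℂ 2 μ | ∃ f : X → ℂ,
      (∃ M L : ℝ, (∀ x, ‖f x‖ ≤ M) ∧ ∀ x y : X, ‖f x - f y‖ ≤ L * dist x y ^ β) ∧
      ∀ᵐ x ∂μ, F x = f x}) ?_ hcl
    · rw [hdense.closure_eq] at hsub
      intro F
      exact hsub (Set.mem_univ F)
    · rintro F ⟨f, ⟨M, L, h1, h2⟩, hF⟩
      have hf : SingInt.HB β f (|M| + |L|) := by
        refine ⟨fun x => (h1 x).trans ?_, fun x y => (h2 x y).trans ?_⟩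
        · linarith [le_abs_self M, abs_nonneg L]
        · gcongr
          linarith [le_abs_self L, abs_nonneg M]
      refine SingInt.krein S hSa F ((measureUnivNNReal μ : ℝ) ^ ((2 : ENNReal).toReal⁻¹) * (|M| + |L|))
        (D' * D) (by positivity) ?_
      intro m
      obtain ⟨g, hg1, hg2⟩ := hiter F f _ hF hf m
      rw [mul_assoc]
      refine Lp.norm_le_of_ae_bound (by positivity) ?_
      filter_upwards [hg1] with x hx
      rw [hx]
      exact hg2.1 x
  have hTn : ‖T‖ ≤ Real.sqrt (D' * D) := by
    apply Real.le_sqrt_of_sq_le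
    rw [sq, ← ContinuousLinearMap.norm_adjoint_comp_self, ← hadj]
    exact ContinuousLinearMap.opNorm_le_bound _ (by positivity) hSd
  have hTn' : ‖T‖ ≤ Real.sqrt (D' * D) + 1 := by linarith
  refine ⟨?_, T, hTn', ?_⟩
  · rintro f hfm ⟨M, L, h1, h2⟩
    have hfL : MemLp f 2 μ :=
      MemLp.of_bound hfm.aestronglyMeasurable M (Filter.Eventually.of_forall h1)
    have hTf := hT (hfL.toLp f) f hfL.coeFn_toLp
    have e1 : eLpNorm (fun x => ∫ y, (η (dist x y / ε) : ℂ) * K x y * f y ∂μ) 2 μ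
        = ‖T (hfL.toLp f)‖ₑ := by
      rw [Lp.enorm_def]
      exact (eLpNorm_congr_ae hTf).symm
    have e2 : eLpNorm f 2 μ = ‖hfL.toLp f‖ₑ := by
      rw [Lp.enorm_def]
      exact (eLpNorm_congr_ae hfL.coeFn_toLp).symm
    rw [e1, e2, ← ofReal_norm, ← ofReal_norm, ← ENNReal.ofReal_mul (by positivity)]
    exact ENNReal.ofReal_le_ofReal (T.le_of_opNorm_le hTn' _)
  · intro F f _ _ hF
    exact hT F f hF
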